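/- Let f be a polymatroid on {a,b,c} with f(a|bc) = f(b|ac) = f(c|ab) = 0 and such that at least one of f(a,b|c), f(a,c|b), f(b,c|a) equals zero. Then f is 1-sticky: any two polymatroids f_x on {a,b,c,x} and f_y on {a,b,c,y} extending f have an amalgam. -/

import Mathlib

open Finset

noncomputable section

variable {α : Type*} [DecidableEq α]

/-- `f` is a polymatroid with ground set `M`: it vanishes on `∅` and is
non-negative, monotone and submodular on subsets of `M`. -/
def IsPolymatroid (M : Finset α) (f : Finset α → ℝ) : Prop :=
  f ∅ = 0 ∧
  (∀ A, A ⊆ M → 0 ≤ f A) ∧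
  (∀ A B, A ⊆ B → B ⊆ M → f A ≤ f B) ∧
  (∀ A B, A ⊆ M → B ⊆ M → f (A ∪ B) + f (A ∩ B) ≤ f A + f B)

/-- `pmi f I J K` is the expression `f(I,J|K) = f(I∪K)+f(J∪K)−f(I∪J∪K)−f(K)`. -/
def pmi (f : Finset α → ℝ) (I J K : Finset α) : ℝ :=
  f (I ∪ K) + f (J ∪ K) - f (I ∪ J ∪ K) - f K

/-- `pcd f I K` is the expression `f(I|K) = f(I∪K) − f(K)`. -/
def pcd (f : Finset α → ℝ) (I K : Finset α) : ℝ := f (I ∪ K) - f K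

/-- Polymatroids `fX` on `M ∪ X` and `fY` on `M ∪ Y` have an amalgam: a common
polymatroid extension on `M ∪ X ∪ Y`. -/
def HaveAmalgam (M X Y : Finset α) (fX fY : Finset α → ℝ) : Prop :=
  ∃ g : Finset α → ℝ, IsPolymatroid (M ∪ X ∪ Y) g ∧
    (∀ A, A ⊆ M ∪ X → g A = fX A) ∧ (∀ A, A ⊆ M ∪ Y → g A = fY A)

/-- Polymatroids `fX` on `M ∪ X` and `fY` on `M ∪ Y` are adhesive: they have a
modular common extension, i.e. one with `g(X,Y|M) = 0`. -/
def Adhesive (M X Y : Finset α) (fX fY : Finset α → ℝ) : Prop :=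
  ∃ g : Finset α → ℝ, IsPolymatroid (M ∪ X ∪ Y) g ∧
    (∀ A, A ⊆ M ∪ X → g A = fX A) ∧ (∀ A, A ⊆ M ∪ Y → g A = fY A) ∧
    pmi g X Y M = 0

/-!
The hypotheses say that `f {c} = f {a, b} = f {a, b, c}` (up to renaming), so that `c` may be
replaced by the pair `{a, b}` in every extension of `f`. An amalgam over `{a, b}` can therefore be
pulled back along `A ↦ (A \ {c}) ∪ {a, b}` (for `c ∈ A`), and it suffices that every polymatroid on
two elements is 1-sticky.

An amalgam of `f_x` and `f_y` over `M` amounts to values `Z A` for the sets `A ∪ {x, y}`. The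
difference `Z B - Z A` has to be at most `ℓ(A, B)`, the smaller of the increments of
`A ↦ f_x (A ∪ {x})` and `A ↦ f_y (A ∪ {y})` from `A` to `B`. When `M` has two elements one takes the
least function with this property whose value at `M` is `max (f_x (M ∪ {x})) (f_y (M ∪ {y}))`: at
`A` it is this maximum minus the `ℓ`-length of a shortest path from `A` to `M`.
-/

section Glue

variable {M : Finset α} {x : α} {f u v : Finset α → ℝ}

/-- Submodularity of a set function on the lattice of subsets of `M`. -/
def SubmodularOn (M : Finset α) (f : Finset α → ℝ) : Prop :=
  ∀ ⦃A B⦄, A ⊆ M → B ⊆ M → f (A ∪ B) + f (A ∩ B) ≤ f A + f B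

theorem isPolymatroid_iff :
    IsPolymatroid M f ↔ f ∅ = 0 ∧ MonotoneOn f (Set.Iic M) ∧ SubmodularOn M f where
  mp := fun ⟨hf0, _, hmono, hsub⟩ => ⟨hf0, fun A _ B hB hAB => hmono A B hAB hB, hsub⟩
  mpr := fun ⟨hf0, hmono, hsub⟩ =>
    ⟨hf0, fun _ hA => hf0 ▸ hmono (empty_subset M) hA (empty_subset _),
      fun _ _ hAB hB => hmono (hAB.trans hB) hB hAB, hsub⟩

/-- One-element extension of a set function: `u` gives the values on the sets avoiding `x`, and
`v A` is the value on `A ∪ {x}`. -/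
def glue (x : α) (u v : Finset α → ℝ) (A : Finset α) : ℝ := if x ∈ A then v (A.erase x) else u A

theorem glue_of_mem {A : Finset α} (hx : x ∈ A) : glue x u v A = v (A.erase x) := if_pos hx

theorem glue_of_notMem {A : Finset α} (hx : x ∉ A) : glue x u v A = u A := if_neg hx

theorem sub_glue (x : α) (f u v : Finset α → ℝ) :
    f - glue x u v = glue x (f - u) ((fun A => f (insert x A)) - v) := by
  ext A
  by_cases hx : x ∈ A <;> simp [glue, hx]

theorem monotoneOn_glue (hu : MonotoneOn u (Set.Iic M)) (hv : MonotoneOn v (Set.Iic M))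
    (huv : ∀ A ⊆ M, u A ≤ v A) : MonotoneOn (glue x u v) (Set.Iic (insert x M)) := by
  intro A hA B hB hAB
  have hBM : B.erase x ⊆ M := subset_insert_iff.1 hB
  by_cases hxA : x ∈ A
  · rw [glue_of_mem hxA, glue_of_mem (hAB hxA)]
    exact hv (subset_insert_iff.1 hA) hBM (erase_subset_erase x hAB)
  have hAM : A ⊆ M := (subset_insert_iff_of_notMem hxA).1 hA
  rw [glue_of_notMem hxA]
  by_cases hxB : x ∈ B
  · rw [glue_of_mem hxB]
    exact (hu hAM hBM (subset_erase.2 ⟨hAB, hxA⟩)).trans (huv _ hBM)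
  · rw [glue_of_notMem hxB]
    exact hu hAM ((subset_insert_iff_of_notMem hxB).1 hB) hAB

namespace SubmodularOn

theorem add_le_of_monotoneOn_sub (hu : SubmodularOn M u) (huv : MonotoneOn (u - v) (Set.Iic M))
    {A B : Finset α} (hA : A ⊆ M) (hB : B ⊆ M) : v (A ∪ B) + u (A ∩ B) ≤ u A + v B := by
  have hdiff := huv hB (union_subset hA hB) subset_union_right
  simp only [Pi.sub_apply] at hdiff
  linarith [hu hA hB]

protected theorem glue (hu : SubmodularOn M u) (hv : SubmodularOn M v)
    (huv : MonotoneOn (u - v) (Set.Iic M)) : SubmodularOn (insert x M) (glue x u v) := by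
  intro A B hA hB
  rw [subset_insert_iff] at hA hB
  by_cases hxA : x ∈ A <;> by_cases hxB : x ∈ B
  · simpa [glue, hxA, hxB, erase_union_distrib, erase_inter, inter_erase] using hv hA hB
  · rw [erase_eq_of_notMem hxB] at hB
    have h := hu.add_le_of_monotoneOn_sub huv hB hA
    simpa [glue, hxA, hxB, erase_union_distrib, erase_eq_of_notMem, inter_comm, union_comm,
      add_comm, inter_erase] using h
  · rw [erase_eq_of_notMem hxA] at hA
    have h := hu.add_le_of_monotoneOn_sub huv hA hB
    simpa [glue, hxA, hxB, erase_union_distrib, erase_eq_of_notMem, inter_erase] using h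
  · rw [erase_eq_of_notMem hxA] at hA
    rw [erase_eq_of_notMem hxB] at hB
    simpa [glue, hxA, hxB] using hu hA hB

end SubmodularOn

end Glue

namespace IsPolymatroid

variable {M N : Finset α} {x : α} {f : Finset α → ℝ}

theorem monotoneOn (hf : IsPolymatroid M f) : MonotoneOn f (Set.Iic M) :=
  (isPolymatroid_iff.1 hf).2.1

theorem submodularOn (hf : IsPolymatroid M f) : SubmodularOn M f := (isPolymatroid_iff.1 hf).2.2

theorem mono (hf : IsPolymatroid M f) (hNM : N ⊆ M) : IsPolymatroid N f :=
  isPolymatroid_iff.2 ⟨hf.1, hf.monotoneOn.mono (Set.Iic_subset_Iic.2 hNM),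
    fun _ _ hA hB => hf.submodularOn (hA.trans hNM) (hB.trans hNM)⟩

theorem monotoneOn_insert (hf : IsPolymatroid (insert x M) f) :
    MonotoneOn (fun A => f (insert x A)) (Set.Iic M) := fun _ hA _ hB hAB =>
  hf.monotoneOn (insert_subset_insert x hA) (insert_subset_insert x hB) (insert_subset_insert x hAB)

theorem submodularOn_insert (hf : IsPolymatroid (insert x M) f) :
    SubmodularOn M (fun A => f (insert x A)) := fun A B hA hB => by
  simpa only [insert_union_distrib, insert_inter_distrib] using
    hf.submodularOn (insert_subset_insert x hA) (insert_subset_insert x hB)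

theorem monotoneOn_sub_insert (hf : IsPolymatroid (insert x M) f) (hx : x ∉ M) :
    MonotoneOn (f - fun A => f (insert x A)) (Set.Iic M) := by
  intro A hA B hB hAB
  have hxB : x ∉ B := fun h => hx (hB h)
  have hsub := hf.submodularOn (insert_subset_insert x hA) (Subset.trans hB (subset_insert x M))
  rw [insert_union, union_eq_right.2 hAB, insert_inter_of_notMem hxB, inter_eq_left.2 hAB] at hsub
  simp only [Pi.sub_apply]
  linarith

theorem le_insert (hf : IsPolymatroid (insert x M) f) {A : Finset α} (hA : A ⊆ M) :
    f A ≤ f (insert x A) :=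
  hf.monotoneOn (hA.trans (subset_insert x M)) (insert_subset_insert x hA) (subset_insert x A)

theorem union_eq_of_union_eq (hf : IsPolymatroid M f) {I K L : Finset α} (hIK : I ⊆ K)
    (hK : K ⊆ M) (hL : L ⊆ M) (hIL : f (I ∪ L) = f I) : f (K ∪ L) = f K := by
  have hsub := hf.submodularOn hK (union_subset (hIK.trans hK) hL)
  rw [← union_assoc, union_eq_left.2 hIK, hIL] at hsub
  have hI : f I ≤ f (K ∩ (I ∪ L)) :=
    hf.monotoneOn (hIK.trans hK) (inter_subset_left.trans hK)
      (subset_inter hIK subset_union_left)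
  have hKL : f K ≤ f (K ∪ L) := hf.monotoneOn hK (union_subset hK hL) subset_union_left
  linarith

theorem biUnion (hf : IsPolymatroid N f) {t : α → Finset α} (ht : ∀ i ∈ M, t i ⊆ N) :
    IsPolymatroid M fun A => f (A.biUnion t) := by
  have maps {A : Finset α} (hA : A ⊆ M) : A.biUnion t ⊆ N :=
    biUnion_subset.2 fun i hi => ht i (hA hi)
  refine isPolymatroid_iff.2 ⟨hf.1, fun A hA B hB hAB => ?_, fun A B hA hB => ?_⟩
  · exact hf.monotoneOn (maps hA) (maps hB) (biUnion_subset_biUnion_of_subset_left t hAB)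
  · have hinter : f ((A ∩ B).biUnion t) ≤ f (A.biUnion t ∩ B.biUnion t) :=
      hf.monotoneOn (maps (inter_subset_left.trans hA)) (inter_subset_left.trans (maps hA))
        (subset_inter (biUnion_subset_biUnion_of_subset_left t inter_subset_left)
          (biUnion_subset_biUnion_of_subset_left t inter_subset_right))
    simp only [union_biUnion]
    linarith [hf.submodularOn (maps hA) (maps hB)]

theorem biUnion_update_eq (hf : IsPolymatroid M f) {c : α} {L A : Finset α} (hA : A ⊆ M)
    (hL : L ⊆ M) (hc : c ∈ M) (hfc : f (insert c L) = f {c}) (hfL : f (insert c L) = f L) :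
    f (A.biUnion (Function.update singleton c L)) = f A := by
  by_cases hcA : c ∈ A
  · have hbiUnion : A.biUnion (Function.update singleton c L) = A.erase c ∪ L := by
      ext i
      simp only [mem_biUnion, Function.update_apply]
      grind
    calc f (A.biUnion (Function.update singleton c L)) = f (A.erase c ∪ L) := by rw [hbiUnion]
      _ = f (A.erase c ∪ L ∪ {c}) :=
        (hf.union_eq_of_union_eq subset_union_right (union_subset ((erase_subset c A).trans hA) hL)
          (singleton_subset_iff.2 hc) (by rw [union_singleton, hfL])).symm
      _ = f (A ∪ L) := by rw [union_right_comm, union_singleton, insert_erase hcA]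
      _ = f A :=
        hf.union_eq_of_union_eq (singleton_subset_iff.2 hcA) hA hL (by rw [singleton_union, hfc])
  · congr 1
    ext i
    simp only [mem_biUnion, Function.update_apply]
    grind

end IsPolymatroid

section Amalgam

variable {M : Finset α} {f u v : Finset α → ℝ}

/-- `Z` is a suitable choice of the values `Z A = g (A ∪ {x, y})`, `A ⊆ M`, of an amalgam `g` whose
values on `A`, `A ∪ {x}` and `A ∪ {y}` are `f A`, `u A` and `v A`. -/
structure IsAmalgamTop (M : Finset α) (f u v Z : Finset α → ℝ) : Prop where
  monotoneOn : MonotoneOn Z (Set.Iic M)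
  submodularOn : SubmodularOn M Z
  monotoneOn_left_sub : MonotoneOn (u - Z) (Set.Iic M)
  monotoneOn_right_sub : MonotoneOn (v - Z) (Set.Iic M)
  add_le : ∀ A ⊆ M, Z A + f A ≤ u A + v A
  left_le : u M ≤ Z M
  right_le : v M ≤ Z M

omit [DecidableEq α] in
theorem le_of_monotoneOn_sub (huv : MonotoneOn (u - v) (Set.Iic M)) (hM : u M ≤ v M)
    {A : Finset α} (hA : A ⊆ M) : u A ≤ v A := by
  have h := huv hA Set.self_mem_Iic hA
  simp only [Pi.sub_apply] at h
  linarith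

theorem IsAmalgamTop.haveAmalgam {x y : α} {fx fy Z : Finset α → ℝ}
    (hZ : IsAmalgamTop M fx (fun A => fx (insert x A)) (fun A => fy (insert y A)) Z)
    (hx : x ∉ M) (hy : y ∉ M) (hxy : x ≠ y)
    (hfx : IsPolymatroid (insert x M) fx) (hfy : IsPolymatroid (insert y M) fy)
    (hfxy : ∀ A ⊆ M, fx A = fy A) : HaveAmalgam M {x} {y} fx fy := by
  set v : Finset α → ℝ := fun A => fy (insert y A)
  -- `k A` is the value of the amalgam at `A ∪ {y}`, for `A ⊆ M ∪ {x}`.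
  set k := glue x v Z
  have hvZ (A) (hA : A ⊆ M) : v A ≤ Z A :=
    le_of_monotoneOn_sub hZ.monotoneOn_right_sub hZ.right_le hA
  have hk_mono : MonotoneOn k (Set.Iic (insert x M)) :=
    monotoneOn_glue hfy.monotoneOn_insert hZ.monotoneOn hvZ
  have hk_sub : SubmodularOn (insert x M) k :=
    hfy.submodularOn_insert.glue hZ.submodularOn hZ.monotoneOn_right_sub
  have hfxv : MonotoneOn (fx - v) (Set.Iic M) :=
    (hfy.monotoneOn_sub_insert hy).congr fun A hA => by simp [v, hfxy A hA]
  have hfxk : MonotoneOn (fx - k) (Set.Iic (insert x M)) := by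
    rw [sub_glue]
    refine monotoneOn_glue hfxv hZ.monotoneOn_left_sub fun A hA => ?_
    simp only [Pi.sub_apply]
    linarith [hZ.add_le A hA]
  have hfxk_le (A) (hA : A ⊆ insert x M) : fx A ≤ k A :=
    le_of_monotoneOn_sub hfxk (by simpa [k, glue, hx] using hZ.left_le) hA
  refine ⟨glue y fx k, ?_, fun A hA => ?_, fun A hA => ?_⟩
  · simp only [union_singleton]
    exact isPolymatroid_iff.2 ⟨(glue_of_notMem (notMem_empty y)).trans hfx.1,
      monotoneOn_glue hfx.monotoneOn hk_mono hfxk_le, hfx.submodularOn.glue hk_sub hfxk⟩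
  · exact glue_of_notMem (by grind)
  · have hxA : x ∉ A := by grind
    by_cases hyA : y ∈ A
    · have hxAy : x ∉ A.erase y := fun h => hxA (mem_of_mem_erase h)
      calc glue y fx k A = k (A.erase y) := glue_of_mem hyA
        _ = v (A.erase y) := glue_of_notMem hxAy
        _ = fy A := congrArg fy (insert_erase hyA)
    · rw [glue_of_notMem hyA, hfxy A (by grind)]

end Amalgam

section CommonIncrement

variable {M A B : Finset α} {f u v : Finset α → ℝ}

/-- The smaller of the increments of `u` and `v` from `A` to `B`: an upper bound for the increment
of the values at the top of an amalgam. -/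
def commonIncrement (u v : Finset α → ℝ) (A B : Finset α) : ℝ := min (u B - u A) (v B - v A)

omit [DecidableEq α] in
theorem commonIncrement_nonneg (hu : MonotoneOn u (Set.Iic M)) (hv : MonotoneOn v (Set.Iic M))
    (hAB : A ⊆ B) (hB : B ⊆ M) : 0 ≤ commonIncrement u v A B :=
  le_min (sub_nonneg.2 (hu (hAB.trans hB) hB hAB)) (sub_nonneg.2 (hv (hAB.trans hB) hB hAB))

theorem commonIncrement_union_le_inter (hu : SubmodularOn M u) (hv : SubmodularOn M v)
    (hA : A ⊆ M) (hB : B ⊆ M) :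
    commonIncrement u v B (A ∪ B) ≤ commonIncrement u v (A ∩ B) A :=
  min_le_min (by linarith [hu hA hB]) (by linarith [hv hA hB])

omit [DecidableEq α] in
theorem sub_le_commonIncrement (hfu : MonotoneOn (f - u) (Set.Iic M))
    (hfv : MonotoneOn (f - v) (Set.Iic M)) (hAB : A ⊆ B) (hB : B ⊆ M) :
    (u + v - f) B - (u + v - f) A ≤ commonIncrement u v A B := by
  have hu := hfu (hAB.trans hB) hB hAB
  have hv := hfv (hAB.trans hB) hB hAB
  simp only [Pi.sub_apply] at hu hv
  exact le_min (by simp only [Pi.sub_apply, Pi.add_apply]; linarith)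
    (by simp only [Pi.sub_apply, Pi.add_apply]; linarith)

end CommonIncrement

section Pair

variable {a b : α} {f u v : Finset α → ℝ}

theorem subset_pair_iff_eq {A : Finset α} :
    A ⊆ {a, b} ↔ A = ∅ ∨ A = {a} ∨ A = {b} ∨ A = {a, b} := by
  simpa only [← coe_subset, ← coe_inj, coe_pair, coe_empty, coe_singleton] using
    Set.subset_pair_iff_eq (s := (A : Set α))

theorem monotoneOn_pair_iff (hab : a ≠ b) : MonotoneOn f (Set.Iic {a, b}) ↔
    f ∅ ≤ f {a} ∧ f ∅ ≤ f {b} ∧ f {a} ≤ f {a, b} ∧ f {b} ≤ f {a, b} := by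
  refine ⟨fun hf => ⟨?_, ?_, ?_, ?_⟩, fun ⟨h0a, h0b, hat, hbt⟩ A hA B hB hAB => ?_⟩
  iterate 4 exact hf (by simp) (by simp) (by simp)
  rw [Set.mem_Iic, subset_pair_iff_eq] at hA hB
  have hmem : (a ∈ A → a ∈ B) ∧ (b ∈ A → b ∈ B) := ⟨fun h => hAB h, fun h => hAB h⟩
  rcases hA with rfl | rfl | rfl | rfl <;> rcases hB with rfl | rfl | rfl | rfl <;>
    first
    | linarith
    | simp [hab, hab.symm] at hmem

theorem submodularOn_pair_iff (hab : a ≠ b) :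
    SubmodularOn {a, b} f ↔ f {a, b} + f ∅ ≤ f {a} + f {b} := by
  refine ⟨fun hf => ?_, fun hf A B hA hB => ?_⟩
  · simpa [hab, ← insert_eq] using hf (A := {a}) (B := {b}) (by simp) (by simp)
  rw [subset_pair_iff_eq] at hA hB
  have hba : ({b, a} : Finset α) = {a, b} := pair_comm b a
  rcases hA with rfl | rfl | rfl | rfl <;> rcases hB with rfl | rfl | rfl | rfl <;>
    simp [hab, hab.symm, hba] <;> linarith

/-- Length of a shortest chain from `A` up to `{a, b}`, where a step has length
`commonIncrement u v`. -/
def pairDist (a b : α) (u v : Finset α → ℝ) (A : Finset α) : ℝ :=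
  if A = ∅ then
    min (commonIncrement u v ∅ {a} + commonIncrement u v {a} {a, b})
      (commonIncrement u v ∅ {b} + commonIncrement u v {b} {a, b})
  else commonIncrement u v A {a, b}

theorem pairDist_of_nonempty {A : Finset α} (hA : A.Nonempty) :
    pairDist a b u v A = commonIncrement u v A {a, b} := if_neg hA.ne_empty

theorem pairDist_self : pairDist a b u v {a, b} = 0 := by
  rw [pairDist_of_nonempty (insert_nonempty a {b}), commonIncrement, sub_self, sub_self, min_self]

theorem pairDist_empty_le_left :
    pairDist a b u v ∅ ≤ commonIncrement u v ∅ {a} + pairDist a b u v {a} := by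
  rw [pairDist_of_nonempty (singleton_nonempty a), pairDist, if_pos rfl]
  exact min_le_left _ _

theorem pairDist_empty_le_right :
    pairDist a b u v ∅ ≤ commonIncrement u v ∅ {b} + pairDist a b u v {b} := by
  rw [pairDist_of_nonempty (singleton_nonempty b), pairDist, if_pos rfl]
  exact min_le_right _ _

theorem pairDist_add_le_pairDist_empty (hab : a ≠ b) (hu : SubmodularOn {a, b} u)
    (hv : SubmodularOn {a, b} v) :
    pairDist a b u v {a} + pairDist a b u v {b} ≤ pairDist a b u v ∅ := by
  have hle_a : commonIncrement u v {b} {a, b} ≤ commonIncrement u v ∅ {a} := by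
    simpa [hab, ← insert_eq] using
      commonIncrement_union_le_inter (A := {a}) (B := {b}) hu hv (by simp) (by simp)
  have hle_b : commonIncrement u v {a} {a, b} ≤ commonIncrement u v ∅ {b} := by
    simpa [hab.symm, ← insert_eq, pair_comm b a] using
      commonIncrement_union_le_inter (A := {b}) (B := {a}) hu hv (by simp) (by simp)
  rw [pairDist_of_nonempty (singleton_nonempty a), pairDist_of_nonempty (singleton_nonempty b),
    pairDist, if_pos rfl]
  exact le_min (by linarith) (by linarith)

theorem sub_le_pairDist (hfu : MonotoneOn (f - u) (Set.Iic {a, b}))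
    (hfv : MonotoneOn (f - v) (Set.Iic {a, b})) {A : Finset α} (hA : A ⊆ {a, b}) :
    (u + v - f) {a, b} - (u + v - f) A ≤ pairDist a b u v A := by
  rcases A.eq_empty_or_nonempty with rfl | hne
  · rw [pairDist, if_pos rfl]
    have via {i : α} (hi : i ∈ ({a, b} : Finset α)) : (u + v - f) {a, b} - (u + v - f) ∅ ≤
        commonIncrement u v ∅ {i} + commonIncrement u v {i} {a, b} := by
      have hi' := singleton_subset_iff.2 hi
      linarith [sub_le_commonIncrement hfu hfv (empty_subset {i}) hi',
        sub_le_commonIncrement hfu hfv hi' Subset.rfl]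
    exact le_min (via (by simp)) (via (by simp))
  · rw [pairDist_of_nonempty hne]
    exact sub_le_commonIncrement hfu hfv hA Subset.rfl

theorem monotoneOn_sub_pairDist {w : Finset α → ℝ} (hab : a ≠ b) (T : ℝ)
    (hw : ∀ A B, commonIncrement u v A B ≤ w B - w A) :
    MonotoneOn (w - fun A => T - pairDist a b u v A) (Set.Iic {a, b}) := by
  rw [monotoneOn_pair_iff hab]
  simp only [Pi.sub_apply, pairDist_self]
  have ha := hw {a} {a, b}
  have hb := hw {b} {a, b}
  rw [← pairDist_of_nonempty (singleton_nonempty a)] at ha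
  rw [← pairDist_of_nonempty (singleton_nonempty b)] at hb
  refine ⟨?_, ?_, ?_, ?_⟩
  · linarith [hw ∅ {a}, pairDist_empty_le_left (a := a) (b := b) (u := u) (v := v)]
  · linarith [hw ∅ {b}, pairDist_empty_le_right (a := a) (b := b) (u := u) (v := v)]
  · linarith
  · linarith

theorem isAmalgamTop_pair (hab : a ≠ b)
    (hu : MonotoneOn u (Set.Iic {a, b})) (hv : MonotoneOn v (Set.Iic {a, b}))
    (hu' : SubmodularOn {a, b} u) (hv' : SubmodularOn {a, b} v)
    (hfu : MonotoneOn (f - u) (Set.Iic {a, b})) (hfv : MonotoneOn (f - v) (Set.Iic {a, b}))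
    (hfu_le : f {a, b} ≤ u {a, b}) (hfv_le : f {a, b} ≤ v {a, b}) :
    IsAmalgamTop {a, b} f u v fun A => max (u {a, b}) (v {a, b}) - pairDist a b u v A := by
  have hsub := pairDist_add_le_pairDist_empty hab hu' hv'
  have hnonneg {A : Finset α} (hA : A ⊆ {a, b}) (hne : A.Nonempty) : 0 ≤ pairDist a b u v A :=
    (commonIncrement_nonneg hu hv hA Subset.rfl).trans_eq (pairDist_of_nonempty hne).symm
  have ha : 0 ≤ pairDist a b u v {a} := hnonneg (by simp) (singleton_nonempty a)
  have hb : 0 ≤ pairDist a b u v {b} := hnonneg (by simp) (singleton_nonempty b)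
  have hmax : max (u {a, b}) (v {a, b}) ≤ (u + v - f) {a, b} :=
    max_le (by simpa [add_sub_assoc] using hfv_le) (by simpa [add_sub_right_comm] using hfu_le)
  exact
    { monotoneOn := by
        rw [monotoneOn_pair_iff hab, pairDist_self]
        exact ⟨by linarith, by linarith, by linarith, by linarith⟩
      submodularOn := by
        rw [submodularOn_pair_iff hab, pairDist_self]
        linarith
      monotoneOn_left_sub := monotoneOn_sub_pairDist hab _ fun _ _ => min_le_left _ _
      monotoneOn_right_sub := monotoneOn_sub_pairDist hab _ fun _ _ => min_le_right _ _
      add_le := fun A hA => by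
        have hdist := hmax.trans (sub_le_iff_le_add.1 (sub_le_pairDist hfu hfv hA))
        simp only [Pi.sub_apply, Pi.add_apply] at hdist
        linarith
      left_le := by simp [pairDist_self]
      right_le := by simp [pairDist_self] }

end Pair

section OneSticky

variable {N L : Finset α} {a b c : α} {f : Finset α → ℝ}

/-- The polymatroid `f` on `M` is 1-sticky: any two one-element extensions of it have an amalgam. -/
def OneSticky (M : Finset α) (f : Finset α → ℝ) : Prop :=
  ∀ x y, x ∉ M → y ∉ M → x ≠ y → ∀ fx fy : Finset α → ℝ,
    IsPolymatroid (insert x M) fx → IsPolymatroid (insert y M) fy →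
    (∀ A ⊆ M, fx A = f A) → (∀ A ⊆ M, fy A = f A) → HaveAmalgam M {x} {y} fx fy

theorem oneSticky_pair (hab : a ≠ b) : OneSticky {a, b} f := by
  intro x y hx hy hxy fx fy hfx hfy hfx_eq hfy_eq
  have hfxy (A) (hA : A ⊆ {a, b}) : fx A = fy A := (hfx_eq A hA).trans (hfy_eq A hA).symm
  refine (isAmalgamTop_pair hab hfx.monotoneOn_insert hfy.monotoneOn_insert
    hfx.submodularOn_insert hfy.submodularOn_insert (hfx.monotoneOn_sub_insert hx) ?_
    (hfx.le_insert Subset.rfl) ?_).haveAmalgam hx hy hxy hfx hfy hfxy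
  · exact (hfy.monotoneOn_sub_insert hy).congr fun A hA => by simp [hfxy A hA]
  · exact (hfxy _ Subset.rfl).trans_le (hfy.le_insert Subset.rfl)

theorem OneSticky.insert_of_eq (hf : OneSticky N f) (hL : L ⊆ N) (hfc : f (insert c L) = f {c})
    (hfL : f (insert c L) = f L) : OneSticky (insert c N) f := by
  intro x y hx hy hxy fx fy hfx hfy hfx_eq hfy_eq
  have hcN {z : α} : insert z N ⊆ insert z (insert c N) :=
    insert_subset_insert z (subset_insert c N)
  obtain ⟨g, hg, hgx, hgy⟩ := hf x y (fun h => hx (mem_insert_of_mem h))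
    (fun h => hy (mem_insert_of_mem h)) hxy fx fy (hfx.mono hcN) (hfy.mono hcN)
    (fun A hA => hfx_eq A (hA.trans (subset_insert c N)))
    (fun A hA => hfy_eq A (hA.trans (subset_insert c N)))
  set t : α → Finset α := Function.update singleton c L
  have maps {K : Finset α} (hK : N ⊆ K) : ∀ i ∈ insert c K, t i ⊆ K := by
    intro i hi
    by_cases hic : i = c
    · simpa [t, hic] using hL.trans hK
    · simpa [t, hic] using hi
  have extends_of {z : α} {fz : Finset α → ℝ} (hfz : IsPolymatroid (insert z (insert c N)) fz)
      (hfz_eq : ∀ A ⊆ insert c N, fz A = f A) (hgz : ∀ A ⊆ N ∪ {z}, g A = fz A)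
      {A : Finset α} (hA : A ⊆ insert c N ∪ {z}) : g (A.biUnion t) = fz A := by
    rw [insert_union] at hA
    rw [hgz _ (biUnion_subset.2 fun i hi => maps subset_union_left i (hA hi))]
    rw [union_singleton, Finset.insert_comm] at hA
    have hLc : L ⊆ insert c N := hL.trans (subset_insert c N)
    have hcL : insert c L ⊆ insert c N := insert_subset_insert c hL
    have hcc : {c} ⊆ insert c N := by simp
    exact hfz.biUnion_update_eq hA (hLc.trans (subset_insert z _)) (by simp)
      (by rw [hfz_eq _ hcL, hfz_eq _ hcc, hfc]) (by rw [hfz_eq _ hcL, hfz_eq _ hLc, hfL])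
  refine ⟨fun A => g (A.biUnion t), ?_, fun A hA => extends_of hfx hfx_eq hgx hA,
    fun A hA => extends_of hfy hfy_eq hgy hA⟩
  simp only [insert_union]
  exact hg.biUnion (maps (subset_union_left.trans subset_union_left))

theorem eq_of_pmi_eq_zero {I J K : Finset α} (hI : pcd f I (J ∪ K) = 0)
    (hJ : pcd f J (I ∪ K) = 0) (hIJ : pmi f I J K = 0) : f (I ∪ J ∪ K) = f K := by
  rw [pcd, ← union_assoc] at hI
  rw [pcd, union_left_comm, ← union_assoc] at hJ
  rw [pmi] at hIJ
  linarith

theorem oneSticky_triple (hab : a ≠ b) (ha : pcd f {a} {b, c} = 0) (hb : pcd f {b} {a, c} = 0)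
    (hc : pcd f {c} {a, b} = 0) (habc : pmi f {a} {b} {c} = 0) : OneSticky {a, b, c} f := by
  have hinsert : ({a, b, c} : Finset α) = insert c {a, b} := by grind
  rw [insert_eq b {c}] at ha
  rw [insert_eq a {c}] at hb
  have hfc : f {a, b, c} = f {c} := by
    simpa only [insert_eq, union_assoc] using eq_of_pmi_eq_zero ha hb habc
  have hfab : f (insert c {a, b}) = f {a, b} := sub_eq_zero.1 hc
  rw [hinsert] at hfc ⊢
  exact (oneSticky_pair hab).insert_of_eq Subset.rfl hfc hfab

end OneSticky

/-- a polymatroid `f` on `{a,b,c}` with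
`f(a|bc) = f(b|ac) = f(c|ab) = 0` and at least one of `f(a,b|c)`, `f(a,c|b)`,
`f(b,c|a)` equal to zero is 1-sticky: any two one-element extensions of `f`
have an amalgam. -/
theorem statement_15 (a b c : α) (hab : a ≠ b) (hac : a ≠ c) (hbc : b ≠ c)
    (f : Finset α → ℝ) (hf : IsPolymatroid {a, b, c} f)
    (ha0 : pcd f {a} {b, c} = 0) (hb0 : pcd f {b} {a, c} = 0)
    (hc0 : pcd f {c} {a, b} = 0)
    (hone : pmi f {a} {b} {c} = 0 ∨ pmi f {a} {c} {b} = 0 ∨ pmi f {b} {c} {a} = 0) :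
    ∀ x y : α, x ∉ ({a, b, c} : Finset α) → y ∉ ({a, b, c} : Finset α) → x ≠ y →
    ∀ fx fy : Finset α → ℝ,
      IsPolymatroid {a, b, c, x} fx → IsPolymatroid {a, b, c, y} fy →
      (∀ A ⊆ ({a, b, c} : Finset α), fx A = f A) →
      (∀ A ⊆ ({a, b, c} : Finset α), fy A = f A) →
      HaveAmalgam {a, b, c} {x} {y} fx fy := by
  have hsticky : OneSticky {a, b, c} f := by
    rcases hone with habc | hacb | hbca
    · exact oneSticky_triple hab ha0 hb0 hc0 habc
    · rw [pair_comm b c] at ha0 ⊢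
      exact oneSticky_triple hac ha0 hc0 hb0 hacb
    · rw [pair_comm a c] at hb0
      rw [pair_comm a b] at hc0
      rw [Finset.insert_comm a b, pair_comm a c]
      exact oneSticky_triple hbc hb0 hc0 ha0 hbca
  have hground (z : α) : ({a, b, c, z} : Finset α) = insert z {a, b, c} := by grind
  simpa only [OneSticky, hground] using hsticky
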